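/- Let a > 0, t₀ > 0 and C₀ ∈ (0,1). There is no twice differentiable function f : [0,∞) → ℝ such that f(t) > 0 for all t ≥ 0, f″(t) ≥ a for all t ≥ 0, and f′(t) ≤ (2C₀/t) f(t) for all t ≥ t₀. -/

import Mathlib

/-! Two growth rates collide. Integrating `f'' ≥ a` twice gives the quadratic lower bound
`f t ≥ f 0 + f' 0 * t + a / 2 * t ^ 2` (`quadratic_lower_bound`). The inequality
`f' ≤ (2 C₀ / t) f` says exactly that `t ↦ f t * t ^ (-(2 C₀))` has nonpositive derivative, so
`f t ≤ K * t ^ (2 C₀)` for large `t` (`power_upper_bound`). Dividing both bounds by `t ^ 2` and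
letting `t → ∞` yields `a / 2 ≤ 0`, because `2 C₀ < 2`. -/

open Set

/-- The mean value theorem on a closed half-line, with derivatives taken within it. -/
theorem monotoneOn_Ici_of_hasDerivWithinAt {g g' : ℝ → ℝ} {s : ℝ}
    (hg : ∀ t ∈ Ici s, HasDerivWithinAt g (g' t) (Ici s) t)
    (hg' : ∀ t ∈ Ici s, 0 ≤ g' t) : MonotoneOn g (Ici s) :=
  monotoneOn_of_hasDerivWithinAt_nonneg (f' := g') (convex_Ici s)
    (fun t ht => (hg t ht).continuousWithinAt)
    (fun t ht => (hg t (interior_subset ht)).mono interior_subset)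
    (fun t ht => hg' t (interior_subset ht))

theorem quadratic_lower_bound {f f' f'' : ℝ → ℝ} {a : ℝ}
    (hf : ∀ t ∈ Ici (0:ℝ), HasDerivWithinAt f (f' t) (Ici 0) t)
    (hf' : ∀ t ∈ Ici (0:ℝ), HasDerivWithinAt f' (f'' t) (Ici 0) t)
    (hf'' : ∀ t ∈ Ici (0:ℝ), a ≤ f'' t) {t : ℝ} (ht : 0 ≤ t) :
    f 0 + f' 0 * t + a / 2 * t ^ 2 ≤ f t := by
  have h1 : MonotoneOn (fun t => f' t - a * t) (Ici 0) :=
    monotoneOn_Ici_of_hasDerivWithinAt (g' := fun t => f'' t - a * 1)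
      (fun t ht => (hf' t ht).sub ((hasDerivWithinAt_id t _).const_mul a))
      (fun t ht => by linarith [hf'' t ht])
  have h2 : MonotoneOn (fun t => f t - (f' 0 * t + a / 2 * t ^ 2)) (Ici 0) := by
    refine monotoneOn_Ici_of_hasDerivWithinAt (g' := fun t => f' t - (f' 0 + a * t))
      (fun t ht => (hf t ht).sub ?_) (fun t ht => ?_)
    · have := ((hasDerivAt_id t).const_mul (f' 0)).add ((hasDerivAt_pow 2 t).const_mul (a / 2))
      exact (this.congr_deriv (by push_cast; ring)).hasDerivWithinAt
    · have := h1 (mem_Ici.2 le_rfl) ht ht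
      simp only at this
      linarith
  have := h2 (mem_Ici.2 le_rfl) ht ht
  simp only at this
  linarith

/-- The differential form of Grönwall's inequality with coefficient `p / t`. -/
theorem power_upper_bound {f f' : ℝ → ℝ} {s p : ℝ} (hs : 0 < s)
    (hf : ∀ t ∈ Ici s, HasDerivWithinAt f (f' t) (Ici s) t)
    (hle : ∀ t, s ≤ t → f' t ≤ (p / t) * f t) {t : ℝ} (ht : s ≤ t) :
    f t * t ^ (-p) ≤ f s * s ^ (-p) := by
  have h : MonotoneOn (fun t => -(f t * t ^ (-p))) (Ici s) := by
    refine monotoneOn_Ici_of_hasDerivWithinAt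
      (fun t ht => ((hf t ht).mul (Real.hasDerivAt_rpow_const
        (Or.inl (hs.trans_le ht).ne')).hasDerivWithinAt).neg) (fun t ht => ?_)
    have ht0 : 0 < t := hs.trans_le ht
    rw [Real.rpow_sub_one ht0.ne']
    have h3 := mul_le_mul_of_nonneg_right (hle t ht) (Real.rpow_nonneg ht0.le (-p))
    have h4 : f t * (-p * (t ^ (-p) / t)) = -((p / t) * f t * t ^ (-p)) := by ring
    linarith
  have := h (mem_Ici.2 le_rfl) ht ht
  simp only at this
  linarith

/-- Analytic skeleton of Theorem 2.3: there is no positive, uniformly convex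
(`f'' ≥ a > 0`) function on `[0,∞)` whose derivative satisfies the slow-growth
bound `f'(t) ≤ (2C₀/t) f(t)` for `t ≥ t₀` with `C₀ < 1`. -/
theorem no_fast_decay_solution (a t₀ C₀ : ℝ)
    (ha : 0 < a) (ht₀ : 0 < t₀) (hC₀ : C₀ ∈ Ioo (0:ℝ) 1) :
    ¬ ∃ f f' f'' : ℝ → ℝ,
      (∀ t ∈ Ici (0:ℝ), HasDerivWithinAt f (f' t) (Ici 0) t) ∧
      (∀ t ∈ Ici (0:ℝ), HasDerivWithinAt f' (f'' t) (Ici 0) t) ∧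
      (∀ t ∈ Ici (0:ℝ), 0 < f t) ∧
      (∀ t ∈ Ici (0:ℝ), a ≤ f'' t) ∧
      (∀ t, t₀ ≤ t → f' t ≤ (2 * C₀ / t) * f t) := by
  rintro ⟨f, f', f'', hf, hf', -, hf'', hle⟩
  have hsub : Ici t₀ ⊆ Ici (0:ℝ) := Ici_subset_Ici.2 ht₀.le
  set K := f t₀ * t₀ ^ (-(2 * C₀)) with hK
  have hlow : Filter.Tendsto (fun t : ℝ => f 0 * t⁻¹ ^ 2 + f' 0 * t⁻¹ + a / 2)
      Filter.atTop (nhds (f 0 * 0 ^ 2 + f' 0 * 0 + a / 2)) :=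
    (((tendsto_inv_atTop_zero.pow 2).const_mul _).add
      (tendsto_inv_atTop_zero.const_mul _)).add_const _
  have hup : Filter.Tendsto (fun t : ℝ => K * t ^ (-(2 - 2 * C₀)))
      Filter.atTop (nhds (K * 0)) :=
    (tendsto_rpow_neg_atTop (by linarith [hC₀.2])).const_mul _
  have key := le_of_tendsto_of_tendsto hlow hup (by
    filter_upwards [Filter.eventually_ge_atTop t₀] with t ht
    have ht0 : 0 < t := ht₀.trans_le ht
    have h1 := quadratic_lower_bound hf hf' hf'' ht0.le
    have h2 := power_upper_bound ht₀ (fun t ht => (hf t (hsub ht)).mono hsub) hle ht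
    have h3 : f t * t ^ (-(2 * C₀)) * t ^ (-(2 - 2 * C₀)) = f t * t⁻¹ ^ 2 := by
      rw [mul_assoc, ← Real.rpow_add ht0,
        show -(2 * C₀) + -(2 - 2 * C₀) = -(2:ℝ) by ring, Real.rpow_neg ht0.le,
        Real.rpow_two, inv_pow]
    calc f 0 * t⁻¹ ^ 2 + f' 0 * t⁻¹ + a / 2
        = (f 0 + f' 0 * t + a / 2 * t ^ 2) * t⁻¹ ^ 2 := by field_simp
      _ ≤ f t * t⁻¹ ^ 2 := mul_le_mul_of_nonneg_right h1 (by positivity)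
      _ = f t * t ^ (-(2 * C₀)) * t ^ (-(2 - 2 * C₀)) := h3.symm
      _ ≤ K * t ^ (-(2 - 2 * C₀)) :=
          mul_le_mul_of_nonneg_right h2 (Real.rpow_nonneg ht0.le _))
  linarith
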